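/- arXiv:2304.06432 — 6 statements merged into one kernel-verified Lean document; each statement's English description precedes it below -/
import Mathlib

section
/- A word α over a linearly ordered alphabet X is a Lyndon word if and only if α is a single letter or α = βγ for some Lyndon words β, γ with β ≺ γ. Moreover, if α is a Lyndon word of length at least 2 and α = βγ where γ is the longest proper suffix of α that is a Lyndon word, then β is a Lyndon word and β ≺ α ≺ γ. -/
/-- A nonempty word over a linearly ordered alphabet is a Lyndon word if it is
strictly lexicographically smaller than every nontrivial rotation of itself
(vacuously true for single letters). -/
def IsLyndon {X : Type*} [LinearOrder X] (w : List X) : Prop :=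
  w ≠ [] ∧ ∀ u v : List X, u ≠ [] → v ≠ [] → w = u ++ v → List.Lex (· < ·) w (v ++ u)

namespace LynAux

variable {X : Type*} [LinearOrder X]

theorem lt_cases {a b : List X} (h : List.Lex (· < ·) a b) :
    (∃ t, t ≠ [] ∧ b = a ++ t) ∨ ∀ c d : List X, a ++ c < b ++ d := by
  induction h with
  | @nil x l => exact Or.inl ⟨x :: l, by simp, rfl⟩
  | @cons x l₁ l₂ h ih =>
    rcases ih with ⟨t, ht, e⟩ | h'
    · exact Or.inl ⟨t, ht, by simp [e]⟩
    · exact Or.inr fun c d => List.Lex.cons (h' c d)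
  | rel h => exact Or.inr fun c d => List.Lex.rel h

theorem app_lt {a b : List X} (s : List X) (h : a < b) : s ++ a < s ++ b :=
  List.Lex.append_left _ h s

theorem lt_app (a : List X) {t : List X} (h : t ≠ []) : a < a ++ t := by
  obtain ⟨x, l, rfl⟩ := List.exists_cons_of_ne_nil h
  simpa using app_lt a (a := []) (b := x :: l) List.Lex.nil

theorem lt_app_right {a b : List X} (t : List X) (h : a < b) : a < b ++ t :=
  List.Lex.append_right _ t h

theorem lt_strict {a b : List X} (h : a < b) (hl : b.length ≤ a.length) (c d : List X) :
    a ++ c < b ++ d := by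
  rcases lt_cases h with ⟨t, ht, e⟩ | h'
  · have := List.length_pos_iff.mpr ht
    rw [e, List.length_append] at hl
    omega
  · exact h' c d

theorem lyn_iff (w : List X) : IsLyndon w ↔
    w ≠ [] ∧ ∀ u v : List X, u ≠ [] → v ≠ [] → w = u ++ v → w < v := by
  constructor
  · rintro ⟨h0, h⟩
    refine ⟨h0, fun u v hu hv e => ?_⟩
    by_contra hn
    have hlu := List.length_pos_iff.mpr hu
    have hlen : w.length = u.length + v.length := by rw [e, List.length_append]
    have hne : v ≠ w := by
      intro e'
      rw [e'] at hlen
      omega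
    have hlt : v < w := lt_of_le_of_ne (not_lt.mp hn) hne
    have h1 : w < v ++ u := h u v hu hv e
    rcases lt_cases hlt with ⟨t, ht, e'⟩ | h'
    · have h2 : w < t ++ v := h v t hv ht e'
      have hlen' : w.length = v.length + t.length := by rw [e', List.length_append]
      have htu : t < u := by
        rcases lt_trichotomy t u with h3 | h3 | h3
        · exact h3
        · rw [e', h3] at h1
          exact absurd h1 (lt_irrefl _)
        · have := app_lt v h3
          rw [← e'] at this
          exact absurd h1 (lt_asymm this)
      have h4 := lt_strict htu (by omega) v v
      rw [← e] at h4
      exact lt_asymm h2 h4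
    · have := h' u []
      rw [List.append_nil] at this
      exact lt_asymm h1 this
  · rintro ⟨h0, h⟩
    exact ⟨h0, fun u v hu hv e => lt_app_right u (h u v hu hv e)⟩

theorem lyn_single (x : X) : IsLyndon [x] := by
  refine ⟨by simp, fun u v hu hv e => ?_⟩
  have := congrArg List.length e
  have hlu := List.length_pos_iff.mpr hu
  have hlv := List.length_pos_iff.mpr hv
  simp at this
  omega

theorem lyn_append {b c : List X} (hb : IsLyndon b) (hc : IsLyndon c) (h : b < c) :
    IsLyndon (b ++ c) := by
  rw [lyn_iff] at hb hc ⊢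
  obtain ⟨hb0, hb⟩ := hb
  obtain ⟨hc0, hc⟩ := hc
  have key : b ++ c < c := by
    rcases lt_cases h with ⟨t, ht, e⟩ | h'
    · have := app_lt b (hc b t hb0 ht e)
      rwa [← e] at this
    · simpa using h' c []
  refine ⟨by simp [hb0], fun u v hu hv e => ?_⟩
  rcases List.append_eq_append_iff.mp e with ⟨s, e1, e2⟩ | ⟨s, e1, e2⟩
  · by_cases hs : s = []
    · subst hs
      simp at e2
      rwa [← e2]
    · exact key.trans (hc s v hs hv e2)
  · by_cases hs : s = []
    · subst hs
      simp at e2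
      rwa [e2]
    · have h1 := hb u s hu hs e1
      rw [e2]
      exact lt_strict h1 (by rw [e1, List.length_append]; omega) c c

/-- It suffices to compare with Lyndon suffixes. -/
theorem lyn_of_lyn_suffix {b : List X} (h0 : b ≠ [])
    (h : ∀ u v : List X, u ≠ [] → b = u ++ v → IsLyndon v → b < v) : IsLyndon b := by
  rw [lyn_iff]
  refine ⟨h0, ?_⟩
  have : ∀ n : ℕ, ∀ u v : List X, v.length = n → u ≠ [] → v ≠ [] → b = u ++ v → b < v := by
    intro n
    induction n using Nat.strong_induction_on with
    | _ n ih =>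
      intro u v hn hu hv e
      by_cases hl : IsLyndon v
      · exact h u v hu e hl
      · rw [lyn_iff] at hl
        push Not at hl
        obtain ⟨p, q, hp, hq, e', hle⟩ := hl hv
        have hlp := List.length_pos_iff.mpr hp
        refine lt_of_lt_of_le (ih q.length ?_ (u ++ p) q rfl (by simp [hu]) hq ?_) hle
        · rw [← hn, e', List.length_append]
          omega
        · rw [e, e', List.append_assoc]
  exact fun u v => this v.length u v rfl

theorem part2 {a b c : List X} (ha : IsLyndon a) (e : a = b ++ c) (hb : b ≠ [])
    (hc : IsLyndon c)
    (hm : ∀ δ β' : List X, a = β' ++ δ → β' ≠ [] → IsLyndon δ → δ.length ≤ c.length) :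
    IsLyndon b ∧ b < a ∧ a < c := by
  have h1 : a < c := ((lyn_iff a).mp ha).2 b c hb hc.1 e
  have h2 : b < a := by
    rw [e]
    exact lt_app b hc.1
  refine ⟨lyn_of_lyn_suffix hb fun u v hu e' hv => ?_, h2, h1⟩
  have hcv : c ≤ v := by
    by_contra hn
    have h3 := hm (v ++ c) u (by rw [e, e', List.append_assoc]) hu
      (lyn_append hv hc (not_le.mp hn))
    have hlv := List.length_pos_iff.mpr hv.1
    rw [List.length_append] at h3
    omega
  exact (h2.trans h1).trans_le hcv

theorem exists_longest {a : List X} (h : 2 ≤ a.length) :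
    ∃ b c : List X, a = b ++ c ∧ b ≠ [] ∧ IsLyndon c ∧
      ∀ δ β' : List X, a = β' ++ δ → β' ≠ [] → IsLyndon δ → δ.length ≤ c.length := by
  classical
  let P : ℕ → Prop := fun n => ∃ b c : List X, a = b ++ c ∧ b ≠ [] ∧ IsLyndon c ∧ c.length = n
  have hP : P 1 := by
    have h0 : a ≠ [] := by
      rintro rfl
      simp at h
    refine ⟨a.dropLast, [a.getLast h0], (List.dropLast_append_getLast h0).symm, ?_,
      lyn_single _, rfl⟩
    rw [← List.length_pos_iff, List.length_dropLast]
    omega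
  have hs := Nat.findGreatest_spec (P := P) (show 1 ≤ a.length by omega) hP
  obtain ⟨b, c, e, hb, hc, hl⟩ := hs
  refine ⟨b, c, e, hb, hc, fun δ β' e' hβ hδ => ?_⟩
  rw [hl]
  exact Nat.le_findGreatest (by rw [e', List.length_append]; omega) ⟨β', δ, e', hβ, hδ, rfl⟩

end LynAux

theorem stmt_0 {X : Type*} [LinearOrder X] :
    (∀ α : List X, IsLyndon α ↔
      ((∃ x : X, α = [x]) ∨
        ∃ β γ : List X, IsLyndon β ∧ IsLyndon γ ∧ List.Lex (· < ·) β γ ∧ α = β ++ γ)) ∧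
    (∀ α β γ : List X, IsLyndon α → 2 ≤ α.length → α = β ++ γ → β ≠ [] → IsLyndon γ →
      (∀ δ β' : List X, α = β' ++ δ → β' ≠ [] → IsLyndon δ → δ.length ≤ γ.length) →
      IsLyndon β ∧ List.Lex (· < ·) β α ∧ List.Lex (· < ·) α γ) := by
  refine ⟨fun α => ⟨fun h => ?_, ?_⟩, fun α β γ ha _ e hb hc hm => LynAux.part2 ha e hb hc hm⟩
  · by_cases hl : 2 ≤ α.length
    · obtain ⟨b, c, e, hb, hc, hm⟩ := LynAux.exists_longest hl
      obtain ⟨h1, h2, h3⟩ := LynAux.part2 h e hb hc hm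
      exact Or.inr ⟨b, c, h1, hc, h2.trans h3, e⟩
    · have := List.length_pos_iff.mpr h.1
      exact Or.inl (List.length_eq_one_iff.mp (by omega))
  · rintro (⟨x, rfl⟩ | ⟨b, c, hb, hc, h, rfl⟩)
    · exact LynAux.lyn_single x
    · exact LynAux.lyn_append hb hc h
end

section
/- Every nonempty word w over a linearly ordered alphabet X can be written in exactly one way as a concatenation w = β₁β₂⋯βₙ of Lyndon words satisfying β₁ ⪰ β₂ ⪰ ⋯ ⪰ βₙ; that is, there is a unique list (β₁, …, βₙ) of Lyndon words, nonincreasing in the lexicographic order, whose concatenation is w (Chen–Fox–Lyndon factorization). -/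
section Aux
variable {X : Type*} [LinearOrder X]

theorem lt_dichotomy (u v : List X) (h : u < v) :
    (∃ t, t ≠ [] ∧ v = u ++ t) ∨ ∀ x y, u ++ x < v ++ y := by
  induction u generalizing v with
  | nil =>
    left
    refine ⟨v, ?_, rfl⟩
    rintro rfl
    exact absurd h (lt_irrefl _)
  | cons a u ih =>
    cases v with
    | nil => exact absurd h (List.not_lt_nil _)
    | cons b v =>
      rw [List.cons_lt_cons_iff] at h
      rcases h with h | ⟨rfl, h⟩
      · right
        intro x y
        rw [List.cons_append, List.cons_append, List.cons_lt_cons_iff]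
        exact Or.inl h
      · rcases ih v h with ⟨t, ht, rfl⟩ | h'
        · exact Or.inl ⟨t, ht, rfl⟩
        · right
          intro x y
          rw [List.cons_append, List.cons_append, List.cons_lt_cons_iff]
          exact Or.inr ⟨rfl, h' x y⟩

theorem append_lt_iff (a x y : List X) : a ++ x < a ++ y ↔ x < y := by
  induction a with
  | nil => rfl
  | cons b a ih => simp [List.cons_lt_cons_iff, ih]

theorem lt_append_self (a x : List X) (hx : x ≠ []) : a < a ++ x := by
  have h : a ++ [] < a ++ x := by
    rw [append_lt_iff]
    cases x with
    | nil => exact absurd rfl hx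
    | cons b x => exact List.nil_lt_cons _ _
  simpa using h

theorem IsLyndon.lt_suffix {w : List X} (hw : IsLyndon w) (u v : List X) (hu : u ≠ [])
    (hv : v ≠ []) (e : w = u ++ v) : w < v := by
  by_contra hcon
  have hne : v ≠ w := by
    intro h
    have := congrArg List.length (h.trans e)
    simp at this
    exact hu this
  have hlt : v < w := lt_of_le_of_ne (not_lt.mp hcon) hne
  have h1 : w < v ++ u := hw.2 u v hu hv e
  rcases lt_dichotomy v w hlt with ⟨t, ht, e2⟩ | h
  · have h2 : w < t ++ v := hw.2 v t hv ht e2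
    have hlen : t.length = u.length := by
      have := congrArg List.length (e.symm.trans e2)
      simp at this
      omega
    have h3 : t < u := by
      rw [e2, append_lt_iff] at h1
      exact h1
    rcases lt_dichotomy t u h3 with ⟨r, hr, e3⟩ | h4
    · have h5 := congrArg List.length e3
      have h6 := List.length_pos_iff.mpr hr
      simp at h5
      omega
    · have := h4 v v
      rw [← e] at this
      exact lt_asymm this h2
  · have := h u []
    rw [List.append_nil] at this
    exact lt_asymm this h1

theorem isLyndon_of_lt_suffix {w : List X} (hw : w ≠ [])
    (h : ∀ u v : List X, u ≠ [] → v ≠ [] → w = u ++ v → w < v) : IsLyndon w :=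
  ⟨hw, fun u v hu hv e => lt_trans (h u v hu hv e) (lt_append_self v u hu)⟩

theorem IsLyndon.append {u v : List X} (hu : IsLyndon u) (hv : IsLyndon v) (h : u < v) :
    IsLyndon (u ++ v) := by
  have key : u ++ v < v := by
    rcases lt_dichotomy u v h with ⟨t, ht, e⟩ | h'
    · have h1 := hv.lt_suffix u t hu.1 ht e
      have h2 : u ++ v < u ++ t := (append_lt_iff _ _ _).mpr h1
      rwa [← e] at h2
    · simpa using h' v []
  apply isLyndon_of_lt_suffix
  · simp [hu.1]
  intro p s hp hs e
  rcases List.append_eq_append_iff.mp e with ⟨a, e1, e2⟩ | ⟨a, e1, e2⟩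
  · by_cases ha : a = []
    · subst ha
      simp at e2
      subst e2
      exact key
    · exact lt_trans key (hv.lt_suffix a s ha hs e2)
  · by_cases ha : a = []
    · subst ha
      simp at e2
      subst e2
      exact key
    · have h1 := hu.lt_suffix p a hp ha e1
      rcases lt_dichotomy u a h1 with ⟨t, ht, e3⟩ | h'
      · have h5 := congrArg List.length e3
        have h6 := congrArg List.length e1
        have h7 := List.length_pos_iff.mpr hp
        simp at h5 h6
        omega
      · rw [e2]
        exact h' v v

theorem exists_insert (L : List (List X)) (u : List X) (hu : IsLyndon u)
    (hL : ∀ β ∈ L, IsLyndon β) (hc : L.Pairwise (fun a b => ¬ a < b)) :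
    ∃ M : List (List X), (∀ β ∈ M, IsLyndon β) ∧ M.Pairwise (fun a b => ¬ a < b) ∧
      M.flatten = u ++ L.flatten := by
  induction L generalizing u with
  | nil => exact ⟨[u], by simpa using hu, by simp, by simp⟩
  | cons v L ih =>
    rw [List.pairwise_cons] at hc
    by_cases h : u < v
    · obtain ⟨M, h1, h2, h3⟩ := ih (u ++ v) (hu.append (hL v (by simp)) h)
        (fun β hβ => hL β (by simp [hβ])) hc.2
      exact ⟨M, h1, h2, by simp [h3]⟩
    · refine ⟨u :: v :: L, ?_, ?_, by simp⟩
      · intro β hβ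
        rcases List.mem_cons.mp hβ with rfl | hβ
        · exact hu
        · exact hL β hβ
      · rw [List.pairwise_cons, List.pairwise_cons]
        refine ⟨?_, hc⟩
        intro b hb
        rcases List.mem_cons.mp hb with rfl | hb
        · exact h
        · have := hc.1 b hb
          exact not_lt.mpr (le_trans (not_lt.mp this) (not_lt.mp h))

theorem exists_fact (w : List X) :
    ∃ M : List (List X), (∀ β ∈ M, IsLyndon β) ∧ M.Pairwise (fun a b => ¬ a < b) ∧
      M.flatten = w := by
  induction w with
  | nil => exact ⟨[], by simp, by simp, by simp⟩
  | cons a w ih =>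
    obtain ⟨L, h1, h2, h3⟩ := ih
    have ha : IsLyndon [a] := by
      refine ⟨by simp, ?_⟩
      intro u v hu hv e
      have h5 := congrArg List.length e
      have h6 := List.length_pos_iff.mpr hu
      have h7 := List.length_pos_iff.mpr hv
      simp at h5
      omega
    obtain ⟨M, k1, k2, k3⟩ := exists_insert L [a] ha h1 h2
    exact ⟨M, k1, k2, by simp [k3, h3]⟩

theorem exists_suffix_le (b : List X) (L : List (List X)) (hb : ∀ d ∈ L, d ≤ b)
    (s r : List X) (hs : s ≠ []) (e : L.flatten = s ++ r) :
    ∃ q p, p ≠ [] ∧ s = q ++ p ∧ p ≤ b := by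
  induction L generalizing s with
  | nil =>
    simp at e
    exact absurd e.1 hs
  | cons d L ih =>
    rw [List.flatten_cons] at e
    have hd : d ≤ b := hb d (by simp)
    have pre : ∀ a, d = s ++ a → ∃ q p, p ≠ [] ∧ s = q ++ p ∧ p ≤ b := by
      intro a e1
      refine ⟨[], s, hs, rfl, le_trans ?_ hd⟩
      by_cases ha : a = []
      · subst ha
        simp [e1]
      · rw [e1]
        exact (lt_append_self s a ha).le
    rcases List.append_eq_append_iff.mp e with ⟨a, e1, e2⟩ | ⟨a, e1, e2⟩
    · by_cases ha : a = []
      · subst ha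
        exact pre [] (by simp [e1])
      · obtain ⟨q, p, h1, h2, h3⟩ := ih (fun d hd => hb d (by simp [hd])) a ha e2
        exact ⟨d ++ q, p, h1, by rw [e1, h2, List.append_assoc], h3⟩
    · exact pre a e1

theorem head_aux (b c a r : List X) (L : List (List X)) (hbne : b ≠ []) (hc : IsLyndon c)
    (hb : ∀ d ∈ L, ¬ b < d) (e1 : c = b ++ a) (e2 : L.flatten = a ++ r) : a = [] := by
  by_contra ha
  obtain ⟨q, p, h1, h2, h3⟩ := exists_suffix_le b L (fun d hd => not_lt.mp (hb d hd)) a r ha e2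
  have h4 : c < p := hc.lt_suffix (b ++ q) p (by simp [hbne]) h1
    (by rw [e1, h2, List.append_assoc])
  have h5 : b < c := by
    rw [e1]
    exact lt_append_self b a ha
  exact absurd (lt_of_lt_of_le h4 h3) (lt_asymm h5)

theorem fact_unique (L M : List (List X)) (hL : ∀ β ∈ L, IsLyndon β)
    (hM : ∀ β ∈ M, IsLyndon β) (cL : L.Pairwise (fun a b => ¬ a < b))
    (cM : M.Pairwise (fun a b => ¬ a < b)) (e : L.flatten = M.flatten) : L = M := by
  induction L generalizing M with
  | nil =>
    cases M with
    | nil => rfl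
    | cons c M =>
      simp at e
      exact absurd e.1 (hM c (by simp)).1
  | cons b L ih =>
    cases M with
    | nil =>
      simp at e
      exact absurd e.1 (hL b (by simp)).1
    | cons c M =>
      rw [List.pairwise_cons] at cL cM
      have hb := hL b (by simp)
      have hc := hM c (by simp)
      rw [List.flatten_cons, List.flatten_cons] at e
      have hbc : b = c := by
        rcases List.append_eq_append_iff.mp e with ⟨a, e1, e2⟩ | ⟨a, e1, e2⟩
        · have := head_aux b c a _ L hb.1 hc cL.1 e1 e2
          simp [e1, this]
        · have := head_aux c b a _ M hc.1 hb cM.1 e1 e2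
          simp [e1, this]
      subst hbc
      rw [ih M (fun β h => hL β (by simp [h])) (fun β h => hM β (by simp [h])) cL.2 cM.2
        (List.append_cancel_left e)]

theorem chain_iff_pairwise (L : List (List X)) :
    L.IsChain (fun a b => ¬ List.Lex (· < ·) a b) ↔ L.Pairwise (fun a b => ¬ a < b) := by
  haveI : IsTrans (List X) (fun a b => ¬ a < b) :=
    ⟨fun a b c h1 h2 => not_lt.mpr (le_trans (not_lt.mp h2) (not_lt.mp h1))⟩
  exact List.isChain_iff_pairwise (R := fun a b : List X => ¬ a < b)

end Aux

/-- Chen–Fox–Lyndon: every nonempty word factors uniquely as a nonincreasing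
concatenation of Lyndon words. -/
theorem stmt_1 {X : Type*} [LinearOrder X] (w : List X) (hw : w ≠ []) :
    ∃! L : List (List X),
      (∀ β ∈ L, IsLyndon β) ∧
        L.Chain' (fun a b => ¬ List.Lex (· < ·) a b) ∧ L.flatten = w := by
  obtain ⟨L, h1, h2, h3⟩ := exists_fact w
  refine ⟨L, ⟨h1, (chain_iff_pairwise L).mpr h2, h3⟩, ?_⟩
  rintro M ⟨k1, k2, k3⟩
  exact fact_unique M L k1 h1 ((chain_iff_pairwise M).mp k2) h2 (k3.trans h3.symm)
end

section
/- Let α be a Lyndon word of length at least 2 with standard factorization st(α) = (α_L, α_R), and let ζ be a Lyndon word with α ≺ ζ. Then the concatenation αζ is a Lyndon word, and the standard factorization of αζ equals (α, ζ) if and only if ζ ⪯ α_R. -/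
namespace LyndonAux

variable {X : Type*} [LinearOrder X]

theorem lt_cases {u v : List X} (h : u < v) : u <+: v ∨ ∀ a b : List X, u ++ a < v ++ b := by
  have h' : List.Lex (· < ·) u v := h
  clear h
  induction h' with
  | nil => left; simp
  | cons h ih =>
    rcases ih with ih | ih
    · left; simpa using ih
    · right; intro a b; exact List.Lex.cons (ih a b)
  | rel h => right; intro a b; exact List.Lex.rel h

theorem append_lt_iff (u a b : List X) : u ++ a < u ++ b ↔ a < b := by
  induction u with
  | nil => simp
  | cons x u ih => simp [List.cons_lt_cons_iff, ih]

theorem le_append (u v : List X) : u ≤ u ++ v := by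
  rcases v with _ | ⟨x, v⟩
  · simp
  · apply le_of_lt
    have := (append_lt_iff u [] (x :: v)).2 (List.nil_lt_cons x v)
    simpa using this

theorem lyndon_iff (w : List X) : IsLyndon w ↔
    w ≠ [] ∧ ∀ u v : List X, u ≠ [] → v ≠ [] → w = u ++ v → w < v := by
  constructor
  · rintro ⟨h0, h⟩
    refine ⟨h0, fun u v hu hv e => ?_⟩
    have h1 : w < v ++ u := h u v hu hv e
    by_contra hc
    have hne : v ≠ w := by
      rintro rfl
      have h2 := congrArg List.length e
      have h3 := List.length_pos_iff.2 hu
      rw [List.length_append] at h2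
      omega
    have hlt : v < w := lt_of_le_of_ne (not_lt.1 hc) hne
    rcases lt_cases hlt with ⟨t, ht⟩ | hp
    · have htu : t < u := by
        rw [← ht] at h1; exact (append_lt_iff _ _ _).1 h1
      have hlen : t.length = u.length := by
        have := congrArg List.length (ht.trans e)
        simp at this; omega
      have htne : t ≠ [] := by
        intro h; apply hu; rw [h] at hlen; exact List.length_eq_zero_iff.1 hlen.symm
      have h2 : w < t ++ v := h v t hv htne ht.symm
      rcases lt_cases htu with hp | hp
      · have := hp.eq_of_length hlen
        exact absurd htu (by rw [this]; exact lt_irrefl _)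
      · have h3 := hp v v
        rw [← e] at h3
        exact lt_asymm h2 h3
    · have := hp u []
      rw [List.append_nil] at this
      exact lt_asymm h1 this
  · rintro ⟨h0, h⟩
    exact ⟨h0, fun u v hu hv e => lt_of_lt_of_le (h u v hu hv e) (le_append v u)⟩

theorem append_lt_right {α ζ : List X} (hζ : IsLyndon ζ) (hα : α ≠ [])
    (h : α < ζ) : α ++ ζ < ζ := by
  rcases lt_cases h with ⟨t, ht⟩ | hp
  · have htne : t ≠ [] := by
      rintro rfl
      rw [List.append_nil] at ht
      exact absurd h (by rw [ht]; exact lt_irrefl _)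
    have h1 := ((lyndon_iff ζ).1 hζ).2 α t hα htne ht.symm
    have := (append_lt_iff α ζ t).2 h1
    rwa [ht] at this
  · simpa using hp ζ []

theorem lyndon_append {α ζ : List X} (hα : IsLyndon α) (hζ : IsLyndon ζ) (h : α < ζ) :
    IsLyndon (α ++ ζ) := by
  have hl := append_lt_right hζ hα.1 h
  refine (lyndon_iff _).2 ⟨by simp [hα.1], fun u v hu hv e => ?_⟩
  rcases List.append_eq_append_iff.1 e with ⟨c, h1, h2⟩ | ⟨c, h1, h2⟩
  · by_cases hc : c = []
    · subst hc; simp at h2; rwa [← h2]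
    · exact hl.trans (((lyndon_iff ζ).1 hζ).2 c v hc hv h2)
  · by_cases hc : c = []
    · subst hc; simp at h2; rwa [h2]
    · have h3 := ((lyndon_iff α).1 hα).2 u c hu hc h1
      rcases lt_cases h3 with hp | hp
      · have := hp.length_le
        have := congrArg List.length h1
        have := List.length_pos_iff.2 hu
        simp at *; omega
      · rw [h2]; exact hp ζ ζ

theorem min_suffix {α αL αR : List X} (hfact : α = αL ++ αR) (hαR : IsLyndon αR)
    (hmax : ∀ δ β' : List X, α = β' ++ δ → β' ≠ [] → IsLyndon δ → δ.length ≤ αR.length) :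
    ∀ (n : ℕ) (p s : List X), s.length = n → α = p ++ s → p ≠ [] → s ≠ [] → αR ≤ s := by
  intro n
  induction n using Nat.strong_induction_on with
  | _ n ih =>
    intro p s hn e hp hs
    by_cases hle : s.length ≤ αR.length
    · have hsuf : s <:+ αR := by
        apply List.suffix_of_suffix_length_le (l₃ := α) ⟨p, e.symm⟩ ⟨αL, hfact.symm⟩ hle
      obtain ⟨q, hq⟩ := hsuf
      by_cases hq0 : q = []
      · subst hq0; simp at hq; rw [hq]
      · exact (((lyndon_iff αR).1 hαR).2 q s hq0 hs hq.symm).le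
    · have hnl : ¬ IsLyndon s := fun h => hle (hmax s p e hp h)
      rw [lyndon_iff] at hnl
      push Not at hnl
      obtain ⟨u, v, hu, hv, huv, hvs⟩ := hnl hs
      have hlt : v.length < n := by
        have := congrArg List.length huv
        have := List.length_pos_iff.2 hu
        simp at *; omega
      exact (ih _ hlt (p ++ u) v rfl (by rw [e, huv, List.append_assoc]) (by simp [hp]) hv).trans hvs

end LyndonAux

/-- If `α` is a Lyndon word of length `≥ 2` with standard factorization `(αL, αR)`
(`αR` being the longest proper Lyndon suffix), and `ζ` is a Lyndon word with `α ≺ ζ`,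
then `αζ` is Lyndon, and its standard factorization is `(α, ζ)` iff `ζ ⪯ αR`. -/
theorem stmt_2 {X : Type*} [LinearOrder X] (α αL αR ζ : List X)
    (hα : IsLyndon α) (hlen : 2 ≤ α.length)
    (hfact : α = αL ++ αR) (hαL : αL ≠ []) (hαR : IsLyndon αR)
    (hmax : ∀ δ β' : List X, α = β' ++ δ → β' ≠ [] → IsLyndon δ → δ.length ≤ αR.length)
    (hζ : IsLyndon ζ) (hαζ : List.Lex (· < ·) α ζ) :
    IsLyndon (α ++ ζ) ∧
      ((∀ δ β' : List X, α ++ ζ = β' ++ δ → β' ≠ [] → IsLyndon δ → δ.length ≤ ζ.length) ↔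
        ¬ List.Lex (· < ·) αR ζ) := by
  have hαζ' : α < ζ := hαζ
  refine ⟨LyndonAux.lyndon_append hα hζ hαζ, ?_, ?_⟩
  · intro h hlt
    have h1 := h (αR ++ ζ) αL (by rw [hfact, List.append_assoc]) hαL
      (LyndonAux.lyndon_append hαR hζ hlt)
    have := List.length_pos_iff.2 hαR.1
    rw [List.length_append] at h1
    omega
  · intro h δ β' e hβ hδ
    have h : ¬ αR < ζ := h
    by_contra hlen2
    push Not at hlen2
    obtain ⟨d, hd⟩ : ζ <:+ δ :=
      List.suffix_of_suffix_length_le (l₃ := α ++ ζ) ⟨α, rfl⟩ ⟨β', e.symm⟩ hlen2.le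
    have hd0 : d ≠ [] := by
      rintro rfl
      simp at hd
      rw [hd] at hlen2
      exact lt_irrefl _ hlen2
    have hαd : α = β' ++ d := by
      rw [← hd, ← List.append_assoc] at e
      exact List.append_cancel_right e
    have h1 := ((LyndonAux.lyndon_iff δ).1 hδ).2 d ζ hd0 hζ.1 hd.symm
    have h2 : d < ζ := lt_of_le_of_lt (by rw [← hd]; exact LyndonAux.le_append d ζ) h1
    have h3 := LyndonAux.min_suffix hfact hαR hmax _ β' d rfl hαd hβ hd0
    exact h (lt_of_le_of_lt h3 h2)
end

section
/- Let k be a commutative ring, X a linearly ordered alphabet, x ∈ X a letter and β a Lyndon word with x ≺ β (comparing the one-letter word x with β). Then for every c ≥ 1 the word xβ^c (x followed by c copies of β) is a Lyndon word, and for every b ≥ 0 the identity E(x)·E(β)^b = Σ_{c=0}^{b} binom(b,c)·E(β)^{b−c}·E(xβ^c) holds in the free algebra k⟨X⟩, where E(xβ^0) := E(x). -/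
def MLt {X : Type*} [LinearOrder X] (a b : List X) : Prop :=
  ∀ u v : List X, List.Lex (· < ·) (a ++ u) (b ++ v)

section helpers
variable {X : Type*} [LinearOrder X]

theorem lex_trans' {a b c : List X} (h : List.Lex (· < ·) a b) (h' : List.Lex (· < ·) b c) :
    List.Lex (· < ·) a c := @lt_trans (List X) _ a b c h h'

theorem lex_asymm' {a b : List X} (h : List.Lex (· < ·) a b) (h' : List.Lex (· < ·) b a) :
    False := @lt_asymm (List X) _ a b h h'

theorem MLt.trans' {a b c : List X} (h : MLt a b) (h' : MLt b c) : MLt a c := fun u v =>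
  lex_trans' (h u []) (h' [] v)

theorem MLt.cons' {a b : List X} (x : X) (h : MLt a b) : MLt (x :: a) (x :: b) := fun u v =>
  List.Lex.cons (h u v)

theorem mlt_of_lex : ∀ {a b : List X}, a.length = b.length → List.Lex (· < ·) a b → MLt a b
  | _, _, hl, List.Lex.nil => by simp at hl
  | _, _, hl, List.Lex.cons h => (mlt_of_lex (by simpa using hl) h).cons' _
  | _, _, _, List.Lex.rel h => fun _ _ => List.Lex.rel h

theorem mlt_cases : ∀ a b : List X, MLt a b ∨ MLt b a ∨ a <+: b ∨ b <+: a
  | [], b => by simp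
  | a :: as, [] => by simp
  | a :: as, b :: bs => by
    rcases lt_trichotomy a b with h | h | h
    · exact Or.inl fun _ _ => List.Lex.rel h
    · subst h
      rcases mlt_cases as bs with h | h | h | h
      · exact Or.inl (h.cons' _)
      · exact Or.inr (Or.inl (h.cons' _))
      · simp [h]
      · simp [h]
    · exact Or.inr (Or.inl fun _ _ => List.Lex.rel h)

theorem lex_append_cancel : ∀ {s a b : List X}, List.Lex (· < ·) (s ++ a) (s ++ b) →
    List.Lex (· < ·) a b
  | [], _, _, h => h
  | x :: s, a, b, h => by
    cases h with
    | cons h => exact lex_append_cancel h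
    | rel h => exact absurd h (lt_irrefl _)

theorem IsLyndon.mlt_suffix {r s : List X} (h : IsLyndon (r ++ s)) (hr : r ≠ []) (hs : s ≠ []) :
    MLt (r ++ s) s := by
  have h1 := h.2 r s hr hs rfl
  rcases mlt_cases (r ++ s) s with h2 | h2 | h2 | h2
  · exact h2
  · have := h2 r []
    simp only [List.append_nil] at this
    exact (lex_asymm' h1 this).elim
  · have := h2.length_le
    have := List.length_pos_iff.2 hr
    simp only [List.length_append] at *
    omega
  · obtain ⟨t, ht⟩ := h2
    have hl : t.length = r.length := by
      have := congrArg List.length ht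
      simp at this
      omega
    rw [← ht] at h1
    have h3 := mlt_of_lex hl (lex_append_cancel h1) s s
    have ht0 : t ≠ [] := by
      rintro rfl
      exact hr (List.length_eq_zero_iff.1 hl.symm)
    exact (lex_asymm' h3 (h.2 s t hs ht0 ht.symm)).elim

theorem IsLyndon.mlt_cons {x : X} {β : List X} (hβ : IsLyndon β)
    (hxβ : List.Lex (· < ·) [x] β) : MLt (x :: β) β := by
  cases hxβ with
  | rel h => exact fun _ _ => List.Lex.rel h
  | cons h =>
    rename_i γ
    have hγ : γ ≠ [] := by
      rintro rfl
      cases h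
    exact (IsLyndon.mlt_suffix (r := [x]) (s := γ) hβ (by simp) hγ).cons' x

theorem suffix_pow (β : List X) : ∀ (c : ℕ) (u v : List X),
    (List.replicate c β).flatten = u ++ v → v ≠ [] →
    ∃ r s j, β = r ++ s ∧ s ≠ [] ∧ v = s ++ (List.replicate j β).flatten
  | 0, u, v, h, hv => by simp at h; exact absurd h.2 hv
  | c + 1, u, v, h, hv => by
    rw [List.replicate_succ, List.flatten_cons, List.append_eq_append_iff] at h
    rcases h with ⟨a, -, h⟩ | ⟨a, h1, h2⟩
    · exact suffix_pow β c a v h hv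
    · by_cases ha : a = []
      · subst ha
        exact suffix_pow β c [] v (by simpa using h2.symm) hv
      · exact ⟨u, a, c, h1, ha, h2⟩

theorem pow_comm' (β : List X) (j : ℕ) :
    β ++ (List.replicate j β).flatten = (List.replicate j β).flatten ++ β := by
  rw [← List.flatten_cons, ← List.replicate_succ, List.replicate_succ']
  simp

theorem isLyndon_cons_pow {x : X} {β : List X} (hβ : IsLyndon β)
    (hxβ : List.Lex (· < ·) [x] β) (c : ℕ) :
    IsLyndon (x :: (List.replicate (c + 1) β).flatten) := by
  refine ⟨by simp, ?_⟩
  intro u v hu hv h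
  obtain ⟨y, u', rfl⟩ := List.exists_cons_of_ne_nil hu
  rw [List.cons_append, List.cons.injEq] at h
  obtain ⟨rfl, h⟩ := h
  obtain ⟨r, s, j, h1, hs, h2⟩ := suffix_pow β _ _ _ h hv
  have hm : MLt (x :: β) s := by
    have h0 := hβ.mlt_cons hxβ
    by_cases hr : r = []
    · subst hr
      rw [List.nil_append] at h1
      rwa [← h1]
    · subst h1
      exact h0.trans' (hβ.mlt_suffix hr hs)
  rw [h2, List.append_assoc, List.replicate_succ, List.flatten_cons, ← List.cons_append]
  exact hm _ _

theorem std_pow {x : X} {β : List X} (hβ : IsLyndon β) (c : ℕ) (δ β' : List X)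
    (h : x :: (List.replicate c β).flatten = β' ++ δ) (hb : β' ≠ []) (hδ : IsLyndon δ) :
    δ.length ≤ β.length := by
  obtain ⟨y, u', rfl⟩ := List.exists_cons_of_ne_nil hb
  rw [List.cons_append, List.cons.injEq] at h
  obtain ⟨r, s, j, h1, hs, h2⟩ := suffix_pow β _ _ _ h.2 hδ.1
  cases j with
  | zero => subst h1; subst h2; simp
  | succ j =>
    exfalso
    have hB : (List.replicate (j + 1) β).flatten ≠ [] := by
      simp [List.replicate_succ, hβ.1]
    have h3 := hδ.2 s _ hs hB h2
    rw [h2] at h3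
    by_cases hr : r = []
    · subst hr
      rw [List.nil_append] at h1
      subst h1
      rw [pow_comm'] at h3
      exact lex_asymm' h3 h3
    · have hm : MLt β s := by
        subst h1
        exact hβ.mlt_suffix hr hs
      have h4 := hm ((List.replicate j β).flatten ++ s) (List.replicate (j + 1) β).flatten
      rw [← List.append_assoc, ← List.flatten_cons, ← List.replicate_succ] at h4
      exact lex_asymm' h3 h4

end helpers

theorem alg_id {A : Type*} [Ring A] (e : A) (y : ℕ → A)
    (h : ∀ c, y (c + 1) = y c * e - e * y c) (b : ℕ) :
    y 0 * e ^ b = ∑ c ∈ Finset.range (b + 1), b.choose c • (e ^ (b - c) * y c) := by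
  let L : Module.End ℤ A := LinearMap.mulLeft ℤ e
  let R : Module.End ℤ A := LinearMap.mulRight ℤ e
  have hc : Commute (R - L) L := by
    refine Commute.sub_left ?_ (Commute.refl _)
    ext a
    simp [L, R, mul_assoc]
  have hA : ∀ c, ((R - L) ^ c) (y 0) = y c := by
    intro c
    induction c with
    | zero => simp
    | succ c ih => rw [pow_succ', Module.End.mul_apply, ih, h]; simp [L, R]
  have hR : (R ^ b) (y 0) = y 0 * e ^ b := by simp [R]
  rw [← hR, ← sub_add_cancel R L, hc.add_pow, LinearMap.sum_apply]
  refine Finset.sum_congr rfl fun c _ => ?_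
  rw [(hc.pow_pow _ _).eq, ← nsmul_eq_mul', LinearMap.smul_apply, Module.End.mul_apply, hA]
  simp [L]

/-- For a letter `x` and a Lyndon word `β` with `x ≺ β`, the word `xβ^c` is Lyndon
for `c ≥ 1`, and `E(x)·E(β)^b = Σ_{c=0}^{b} C(b,c)·E(β)^{b−c}·E(xβ^c)` holds in the
free algebra, where `E` is the Lyndon–Shirshov basis (characterized by the two
hypotheses `hE1`, `hE2`). -/
theorem stmt_3 {X : Type*} [LinearOrder X] (k : Type*) [CommRing k]
    (E : List X → FreeAlgebra k X)
    (hE1 : ∀ x : X, E [x] = FreeAlgebra.ι k x)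
    (hE2 : ∀ αL αR : List X, IsLyndon (αL ++ αR) → αL ≠ [] → IsLyndon αR →
      (∀ δ β' : List X, αL ++ αR = β' ++ δ → β' ≠ [] → IsLyndon δ →
        δ.length ≤ αR.length) →
      E (αL ++ αR) = E αL * E αR - E αR * E αL)
    (x : X) (β : List X) (hβ : IsLyndon β) (hxβ : List.Lex (· < ·) [x] β) :
    (∀ c : ℕ, 1 ≤ c → IsLyndon (x :: (List.replicate c β).flatten)) ∧
    ∀ b : ℕ, E [x] * E β ^ b =
      ∑ c ∈ Finset.range (b + 1),
        b.choose c • (E β ^ (b - c) * E (x :: (List.replicate c β).flatten)) := by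

  refine ⟨fun c hc => ?_, fun b => ?_⟩
  · obtain ⟨c, rfl⟩ := Nat.exists_eq_add_of_le' hc
    exact isLyndon_cons_pow hβ hxβ c
  · refine alg_id (E β) (fun c => E (x :: (List.replicate c β).flatten)) (fun c => ?_) b
    have he : x :: (List.replicate (c + 1) β).flatten
        = (x :: (List.replicate c β).flatten) ++ β := by
      rw [List.replicate_succ, List.flatten_cons, pow_comm', List.cons_append]
    have hl := isLyndon_cons_pow hβ hxβ c
    have hst := std_pow (x := x) hβ (c + 1)
    simp only [he] at hl hst ⊢
    exact hE2 _ _ hl (by simp) hβ hst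
end

section
/- Let α, β be Lyndon words over a linearly ordered alphabet X with α ≺ β, where α has length at least 2 and standard factorization (α_L, α_R), and suppose α_R ≺ β. Then the concatenation αβ is a Lyndon word satisfying α_R ⪯ (αβ)_R ≺ β, and in the free algebra ℤ⟨X⟩ there is a finitely supported family of integers (k_γ), indexed by Lyndon words γ, such that E(α)E(β) − E(β)E(α) = E(αβ) + Σ_γ k_γ·E(γ), where every γ with k_γ ≠ 0 has length at least 2 and satisfies αβ ≺ γ ≺ β, α_R ⪯ γ_R ≺ β (γ_R being the right factor of the standard factorization of γ), and γ(x) = α(x) + β(x) for every letter x. -/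
namespace LS

variable {X : Type*} [LinearOrder X]

theorem append_lt_append_left (a : List X) {b c : List X} (h : b < c) : a ++ b < a ++ c := by
  induction a with
  | nil => simpa using h
  | cons x a ih => exact List.Lex.cons ih

theorem lt_of_append_left (a : List X) {b c : List X} (h : a ++ b < a ++ c) : b < c := by
  rcases lt_trichotomy b c with h1 | h1 | h1
  · exact h1
  · subst h1; exact absurd h (lt_irrefl _)
  · exact absurd (h.trans (append_lt_append_left a h1)) (lt_irrefl _)

theorem append_le_append_left (a : List X) {b c : List X} (h : b ≤ c) : a ++ b ≤ a ++ c := by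
  rcases h.lt_or_eq with h | h
  · exact (append_lt_append_left a h).le
  · rw [h]

theorem lt_append (a : List X) {b : List X} (h : b ≠ []) : a < a ++ b := by
  have : ([] : List X) < b := by
    cases b with
    | nil => exact absurd rfl h
    | cons x b => exact List.Lex.nil
  simpa using append_lt_append_left a this

theorem append_lt_of_not_prefix {a b : List X} (h : a < b) (hp : ¬ a <+: b) (c d : List X) :
    a ++ c < b ++ d := by
  have h' : List.Lex (· < ·) a b := h
  clear h
  induction h' with
  | nil => exact absurd List.nil_prefix hp
  | rel h => exact List.Lex.rel h
  | cons h ih =>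
    refine List.Lex.cons (ih ?_)
    intro hh
    apply hp
    simpa using hh

theorem append_lt_of_length {a b : List X} (h : a < b) (hl : b.length ≤ a.length) (c d : List X) :
    a ++ c < b ++ d := by
  refine append_lt_of_not_prefix h ?_ c d
  intro hp
  have := hp.eq_of_length_le hl
  subst this
  exact lt_irrefl _ h

theorem lyndon_lt {w u v : List X} (h : IsLyndon w) (hw : w = u ++ v) (hu : u ≠ []) (hv : v ≠ []) :
    w < v := by
  have h1 : w < v ++ u := h.2 u v hu hv hw
  by_contra hc
  have hc : v ≤ w := not_lt.mp hc
  have hne : v ≠ w := by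
    intro he
    have := congrArg List.length hw
    rw [he] at this
    have := List.length_pos_iff.mpr hu
    rw [List.length_append] at *; omega
  have hlt := lt_of_le_of_ne hc hne
  by_cases hp : v <+: w
  · obtain ⟨t, ht⟩ := hp
    have htu : t < u := by
      apply lt_of_append_left v
      rw [ht]; exact h1
    have hlen : u.length ≤ t.length := by
      have := congrArg List.length hw
      have h2 := congrArg List.length ht
      simp at *; omega
    have h3 : t ++ v < u ++ v := append_lt_of_length htu hlen v v
    have htn : t ≠ [] := by
      rintro rfl
      have := List.length_pos_iff.mpr hu
      simp at hlen; contradiction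
    have h4 : w < t ++ v := h.2 v t hv htn ht.symm
    rw [← hw] at h3
    exact lt_irrefl _ (h3.trans h4)
  · have := append_lt_of_not_prefix hlt hp u []
    simp at this
    exact lt_irrefl _ (this.trans h1)

theorem lyndon_of {w : List X} (hw : w ≠ [])
    (h : ∀ u v, w = u ++ v → u ≠ [] → v ≠ [] → w < v) : IsLyndon w := by
  refine ⟨hw, fun u v hu hv he => ?_⟩
  exact (h u v he hu hv).trans (lt_append v hu)

theorem append_lt_self {a b : List X} (hb : IsLyndon b) (ha : a ≠ []) (h : a < b) : a ++ b < b := by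
  by_cases hp : a <+: b
  · obtain ⟨t, ht⟩ := hp
    have htn : t ≠ [] := by
      rintro rfl
      simp at ht; subst ht; exact lt_irrefl _ h
    have := lyndon_lt hb ht.symm ha htn
    have := append_lt_append_left a this
    rwa [ht] at this
  · simpa using append_lt_of_not_prefix h hp b []

theorem lyndon_append {a b : List X} (ha : IsLyndon a) (hb : IsLyndon b) (h : a < b) :
    IsLyndon (a ++ b) := by
  apply lyndon_of (by simp [ha.1])
  intro u v he hu hv
  have key := append_lt_self hb ha.1 h
  rcases List.append_eq_append_iff.mp he with ⟨s, h1, h2⟩ | ⟨s, h1, h2⟩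
  · by_cases hs : s = []
    · subst hs; simp at h2; rwa [← h2]
    · exact key.trans (lyndon_lt hb h2 hs hv)
  · by_cases hs : s = []
    · subst hs; simp at h2; rwa [h2]
    · have := lyndon_lt ha h1 hu hs
      rw [h2]
      exact append_lt_of_length this (by rw [h1]; simp) b b

theorem exists_min_suffix (w : List X) (hw : w ≠ []) :
    ∃ u m, w = u ++ m ∧ IsLyndon m ∧ ∀ u' v, w = u' ++ v → v ≠ [] → m ≤ v := by
  classical
  have hne : (w.tails.toFinset.filter (· ≠ [])).Nonempty := ⟨w, by simp [hw]⟩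
  obtain ⟨m, hm, hmin⟩ := Finset.exists_min_image _ id hne
  simp only [Finset.mem_filter, List.mem_toFinset, List.mem_tails, id] at hm hmin
  obtain ⟨⟨u, hu⟩, hm0⟩ := hm
  refine ⟨u, m, hu.symm, ?_, fun u' v he hv => hmin v ⟨⟨u', he.symm⟩, hv⟩⟩
  apply lyndon_of hm0
  intro a b he ha hb
  refine lt_of_le_of_ne (hmin b ⟨⟨u ++ a, by rw [← hu, he]; simp⟩, hb⟩) ?_
  intro hh
  have := congrArg List.length he
  have h2 := List.length_pos_iff.mpr ha
  rw [hh] at this; simp at this; contradiction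

def Std (l r w : List X) : Prop :=
  w = l ++ r ∧ l ≠ [] ∧ IsLyndon r ∧
    ∀ δ β' : List X, w = β' ++ δ → β' ≠ [] → IsLyndon δ → δ.length ≤ r.length

theorem suffix_of_len {w a b c d : List X} (h1 : w = a ++ b) (h2 : w = c ++ d)
    (h : b.length ≤ d.length) : ∃ t, d = t ++ b ∧ a = c ++ t := by
  rw [h1] at h2
  rcases List.append_eq_append_iff.mp h2 with ⟨s, h3, h4⟩ | ⟨s, h3, h4⟩
  · have : s = [] := by
      have := congrArg List.length h4
      simp at this
      exact List.length_eq_zero_iff.mp (by omega)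
    subst this
    exact ⟨[], by simpa using h4.symm, by simpa using h3.symm⟩
  · exact ⟨s, h4, h3⟩

/-- The standard right factor is the least proper suffix. -/
theorem Std.le {l r w u s : List X} (h : Std l r w) (hw : w = u ++ s) (hu : u ≠ []) (hs : s ≠ []) :
    r ≤ s := by
  obtain ⟨h1, h2, h3, h4⟩ := h
  obtain ⟨a, m, ham, hm, hmin⟩ := exists_min_suffix s hs
  have hms : m ≤ s := hmin [] s rfl hs
  have hwm : w = (u ++ a) ++ m := by rw [hw, ham]; simp
  have hl := h4 m (u ++ a) hwm (by simp [hu]) hm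
  obtain ⟨t, ht, -⟩ := suffix_of_len hwm h1 hl
  refine le_trans ?_ hms
  by_cases hte : t = []
  · subst hte; simp at ht; rw [ht]
  · exact (lyndon_lt h3 ht hte hm.1).le

theorem exists_std (w : List X) (hw : 2 ≤ w.length) : ∃ l r, Std l r w := by
  obtain ⟨x, t, rfl⟩ : ∃ x t, w = x :: t := by
    cases w with
    | nil => simp at hw
    | cons x t => exact ⟨x, t, rfl⟩
  have ht : t ≠ [] := by rintro rfl; simp at hw
  obtain ⟨u, m, hm, hml, hmin⟩ := exists_min_suffix t ht
  refine ⟨x :: u, m, by simp [hm], by simp, hml, ?_⟩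
  intro δ β' he hb hδ
  by_contra hc
  obtain ⟨y, b, rfl⟩ : ∃ y b, β' = y :: b := by
    cases β' with
    | nil => simp at hb
    | cons x t => exact ⟨x, t, rfl⟩
  simp at he
  have h1 := hmin b δ he.2 hδ.1
  obtain ⟨s, hs, -⟩ := suffix_of_len hm he.2 (by omega)
  have hs0 : s ≠ [] := by rintro rfl; simp at hs; subst hs; omega
  exact absurd (lyndon_lt hδ hs hs0 hml.1) (not_lt.mpr h1)

theorem Std.two_le {l r w : List X} (h : Std l r w) : 2 ≤ w.length := by
  obtain ⟨h1, h2, h3, -⟩ := h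
  have := List.length_pos_iff.mpr h2
  have := List.length_pos_iff.mpr h3.1
  rw [h1, List.length_append]; omega

/-- If a Lyndon word ends in `r` with `r` the right factor, suffixes of `l` are at least `r`. -/
theorem Std.left_suffix {l r w u m : List X} (h : Std l r w) (hl : l = u ++ m)
    (hu : u ≠ []) (hm : IsLyndon m) : r ≤ m := by
  by_contra hc
  have hc := not_le.mp hc
  have h2 := lyndon_append hm h.2.2.1 hc
  have := h.2.2.2 (m ++ r) u (by rw [h.1, hl]; simp) hu h2
  have h0 := List.length_pos_iff.mpr hm.1
  simp at this; exact hm.1 this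

theorem Std.left {l r w : List X} (hw : IsLyndon w) (h : Std l r w) : IsLyndon l := by
  obtain ⟨u, m, hum, hm, hmin⟩ := exists_min_suffix l h.2.1
  by_cases hu : u = []
  · subst hu; simp at hum; rwa [hum]
  · exfalso
    have h1 := h.left_suffix hum hu hm
    have h2 : m ≤ l := hmin [] l rfl h.2.1
    have h3 : l < w := by rw [h.1]; exact lt_append l h.2.2.1.1
    have h4 : w < r := lyndon_lt hw h.1 h.2.1 h.2.2.1.1
    exact lt_irrefl _ (h1.trans_lt (h2.trans_lt (h3.trans h4)))

theorem std_append {a b : List X} (ha : a ≠ []) (hb : IsLyndon b)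
    (h : ∀ u s, a = u ++ s → u ≠ [] → s ≠ [] → b ≤ s) : Std a b (a ++ b) := by
  refine ⟨rfl, ha, hb, ?_⟩
  intro δ β' he hβ hδ
  by_contra hc
  obtain ⟨s, hs, hs2⟩ := suffix_of_len rfl he (by omega)
  have hs0 : s ≠ [] := by rintro rfl; simp at hs; subst hs; omega
  have h1 := h β' s hs2 hβ hs0
  have h2 := lyndon_lt hδ hs hs0 hb.1
  have h3 : s < δ := by rw [hs]; exact lt_append s hb.1
  exact lt_irrefl _ (h1.trans_lt (h3.trans h2))

theorem std_append_of_std {a b l r : List X} (hb : IsLyndon b) (h : Std l r a) (hr : b ≤ r) :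
    Std a b (a ++ b) :=
  std_append (by rw [h.1]; simp [h.2.1]) hb (fun _ _ h1 h2 h3 => hr.trans (h.le h1 h2 h3))

theorem std_append_lt {a b l r l' r' : List X} (hb : IsLyndon b) (h : Std l r a) (hr : r < b)
    (h' : Std l' r' (a ++ b)) : r ≤ r' ∧ r' < b := by
  have h1 : IsLyndon (r ++ b) := lyndon_append h.2.2.1 hb hr
  have h2 := h'.2.2.2 (r ++ b) l (by rw [h.1]; simp) h.2.1 h1
  have h0 := List.length_pos_iff.mpr h.2.2.1.1
  obtain ⟨s, hs, hs2⟩ := suffix_of_len rfl h'.1 (by simp at h2; omega)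
  have hs0 : s ≠ [] := by rintro rfl; simp at hs; subst hs; simp at h2; exact h.2.2.1.1 h2
  constructor
  · refine (h.le hs2 h'.2.1 hs0).trans ?_
    rw [hs]; exact (lt_append s hb.1).le
  · exact lyndon_lt h'.2.2.1 hs hs0 hb.1

def Hi (α β : List X) : Set (List X) :=
  {γ | IsLyndon γ ∧ γ.Perm (α ++ β) ∧ α ++ β < γ ∧ γ < β ∧
    ∃ l r, Std l r γ ∧ r < β ∧ ∃ aL aR, Std aL aR α ∧ aR ≤ r}

def Hi' (α β : List X) : Set (List X) :=
  {γ | IsLyndon γ ∧ γ.Perm (α ++ β) ∧ α ++ β ≤ γ ∧ γ < β ∧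
    ∃ l r, Std l r γ ∧ (r = β ∨ (r < β ∧ ∃ aL aR, Std aL aR α ∧ aR ≤ r))}

theorem std_or {α β : List X} (hα : IsLyndon α) (hβ : IsLyndon β) :
    Std α β (α ++ β) ∨ ∃ l r, Std l r α ∧ r < β := by
  by_cases h : 2 ≤ α.length
  · obtain ⟨l, r, hs⟩ := exists_std α h
    by_cases hr : r < β
    · exact Or.inr ⟨l, r, hs, hr⟩
    · exact Or.inl (std_append_of_std hβ hs (not_lt.mp hr))
  · left
    apply std_append hα.1 hβ
    intro u s he hu hs
    exfalso
    have := List.length_pos_iff.mpr hu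
    have := List.length_pos_iff.mpr hs
    rw [he, List.length_append] at h; omega

theorem self_mem {α β : List X} (hα : IsLyndon α) (hβ : IsLyndon β) (h : α < β) :
    α ++ β ∈ Hi' α β := by
  refine ⟨lyndon_append hα hβ h, List.Perm.refl _, le_refl _, append_lt_self hβ hα.1 h, ?_⟩
  rcases std_or hα hβ with h1 | ⟨l, r, h1, h2⟩
  · exact ⟨α, β, h1, Or.inl rfl⟩
  · have hlen : 2 ≤ (α ++ β).length := by have := h1.two_le; simp; omega
    obtain ⟨l', r', h'⟩ := exists_std _ hlen
    obtain ⟨h3, h4⟩ := std_append_lt hβ h1 h2 h'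
    exact ⟨l', r', h', Or.inr ⟨h4, l, r, h1, h3⟩⟩

theorem Hi_sub (α β : List X) : Hi α β ⊆ Hi' α β := by
  rintro γ ⟨h1, h2, h3, h4, l, r, h5, h6⟩
  exact ⟨h1, h2, h3.le, h4, l, r, h5, Or.inr h6⟩

theorem rlie_add {A : Type*} [Ring A] (a x y : A) : ⁅a, x + y⁆ = ⁅a, x⁆ + ⁅a, y⁆ := by
  simp only [Ring.lie_def]; noncomm_ring

theorem rlie_neg {A : Type*} [Ring A] (a x : A) : ⁅a, -x⁆ = -⁅a, x⁆ := by
  simp only [Ring.lie_def]; noncomm_ring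

theorem rlie_skew {A : Type*} [Ring A] (a x : A) : -⁅x, a⁆ = ⁅a, x⁆ := by
  simp only [Ring.lie_def]; noncomm_ring

section alg

variable {A : Type*} [Ring A] (E : List X → A)

def Sp (S : Set (List X)) : AddSubgroup A := AddSubgroup.closure (E '' S)

theorem Sp_lie {S : Set (List X)} {N : AddSubgroup A} {a x : A}
    (h : ∀ γ ∈ S, ⁅a, E γ⁆ ∈ N) (hx : x ∈ Sp E S) : ⁅a, x⁆ ∈ N := by
  induction hx using AddSubgroup.closure_induction with
  | mem x hx => obtain ⟨γ, hγ, rfl⟩ := hx; exact h γ hγ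
  | zero => simp [Ring.lie_def]
  | add x y _ _ hx hy => rw [rlie_add]; exact N.add_mem hx hy
  | neg x _ hx => rw [rlie_neg]; exact N.neg_mem hx

theorem Sp_mono {S T : Set (List X)} (h : S ⊆ T) : Sp E S ≤ Sp E T :=
  AddSubgroup.closure_mono (Set.image_mono h)

theorem mem_Sp {S : Set (List X)} {γ : List X} (h : γ ∈ S) : E γ ∈ Sp E S :=
  AddSubgroup.subset_closure ⟨γ, h, rfl⟩

def C (α β : List X) : Prop := ⁅E α, E β⁆ - E (α ++ β) ∈ Sp E (Hi α β)

variable {E}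

theorem C.weak {α β : List X} (hα : IsLyndon α) (hβ : IsLyndon β) (h : α < β) (hC : C E α β) :
    ⁅E α, E β⁆ ∈ Sp E (Hi' α β) := by
  have := AddSubgroup.add_mem _ (Sp_mono E (Hi_sub α β) hC) (mem_Sp E (self_mem hα hβ h))
  simpa using this

theorem Hi'_left {α β l r γ : List X} (hα : IsLyndon α) (hβ : IsLyndon β)
    (hs : Std l r α) (hr : r < β) (hγp : γ.Perm (r ++ β)) (hγ : r ++ β ≤ γ) (hγβ : γ < β)
    {η : List X} (hη : η ∈ Hi' l γ) (hne : α ++ β < η) : η ∈ Hi α β := by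
  obtain ⟨h1, h2, h3, h4, l', r', h5, h6⟩ := hη
  refine ⟨h1, ?_, hne, h4.trans hγβ, l', r', h5, ?_, l, r, hs, ?_⟩
  · rw [hs.1, List.append_assoc]
    exact h2.trans (hγp.append_left l)
  · rcases h6 with h6 | h6
    · rwa [h6]
    · exact h6.1.trans hγβ
  · rcases h6 with rfl | ⟨h6, aL, aR, h7, h8⟩
    · exact (lt_append r hβ.1).le.trans hγ
    · exact (hs.left_suffix h7.1 h7.2.1 h7.2.2.1).trans h8

theorem step (hE2 : ∀ l r w : List X, IsLyndon w → Std l r w → E w = ⁅E l, E r⁆)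
    {α β : List X} (hα : IsLyndon α) (hβ : IsLyndon β) (h : α < β)
    (IH1 : ∀ a b, IsLyndon a → IsLyndon b → a < b →
      (a ++ b).length < (α ++ β).length → C E a b)
    (IH2 : ∀ a b, IsLyndon a → IsLyndon b → a < b →
      (a ++ b).Perm (α ++ β) → b < β → C E a b) : C E α β := by
  rcases std_or hα hβ with h1 | ⟨l, r, hs, hr⟩
  · unfold C
    rw [hE2 α β _ (lyndon_append hα hβ h) h1, sub_self]
    exact AddSubgroup.zero_mem _
  have hl : IsLyndon l := hs.left hα
  have hrL : IsLyndon r := hs.2.2.1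
  have hlα : l < α := by rw [hs.1]; exact lt_append l hrL.1
  have hαr : α < r := lyndon_lt hα hs.1 hs.2.1 hrL.1
  have hlen : α.length = l.length + r.length := by rw [hs.1]; simp
  have hl0 := List.length_pos_iff.mpr hl.1
  have hr0 := List.length_pos_iff.mpr hrL.1
  have hassoc : α ++ β = l ++ (r ++ β) := by rw [hs.1]; simp
  have hCr : C E r β := IH1 r β hrL hβ hr (by simp; omega)
  have hrβ := lyndon_append hrL hβ hr
  have hrββ := append_lt_self hβ hrL.1 hr
  have hrrβ := lt_append r hβ.1
  have hlr := hlα.trans hαr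
  -- first piece
  have hA : ⁅E l, E (r ++ β)⁆ - E (α ++ β) ∈ Sp E (Hi α β) := by
    have h1 : C E l (r ++ β) := IH2 l (r ++ β) hl hrβ (hlr.trans hrrβ) (by rw [hassoc]) hrββ
    unfold C at h1
    rw [← hassoc] at h1
    refine Sp_mono E ?_ h1
    intro η hη
    exact Hi'_left hα hβ hs hr (List.Perm.refl _) (le_refl _) hrββ (Hi_sub _ _ hη)
      (by rw [hassoc]; exact hη.2.2.1)
  have hB : ⁅E l, ⁅E r, E β⁆ - E (r ++ β)⁆ ∈ Sp E (Hi α β) := by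
    refine Sp_lie E ?_ hCr
    rintro γ ⟨g1, g2, g3, g4, -⟩
    have hlg : l < γ := hlr.trans (hrrβ.trans g3)
    have h1 : C E l γ := IH2 l γ hl g1 hlg (by rw [hassoc]; exact g2.append_left l) g4
    refine Sp_mono E ?_ (h1.weak hl g1 hlg)
    intro η hη
    refine Hi'_left hα hβ hs hr g2 g3.le g4 hη ?_
    rw [hassoc]
    exact (append_lt_append_left l g3).trans_le hη.2.2.1
  have hD : ⁅E r, ⁅E l, E β⁆⁆ ∈ Sp E (Hi α β) := by
    have h1 : C E l β := IH1 l β hl hβ (hlα.trans h) (by simp; omega)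
    refine Sp_lie E ?_ (h1.weak hl hβ (hlα.trans h))
    rintro γ ⟨g1, g2, g3, g4, l', r', g5, g6⟩
    have hrr' : r ≤ r' := by
      rcases g6 with rfl | ⟨-, aL, aR, h7, h8⟩
      · exact hr.le
      · exact (hs.left_suffix h7.1 h7.2.1 h7.2.2.1).trans h8
    have hperm : (γ ++ r).Perm (α ++ β) := by
      rw [hassoc]
      refine (g2.append_right r).trans ?_
      rw [List.append_assoc]
      exact List.perm_append_comm.append_left l
    rcases lt_trichotomy γ r with hc | hc | hc
    · have hst := std_append_of_std hrL g5 hrr'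
      have hLy := lyndon_append g1 hrL hc
      rw [← rlie_skew, ← hE2 _ _ _ hLy hst]
      refine AddSubgroup.neg_mem _ (mem_Sp E ⟨hLy, hperm, ?_, ?_, γ, r, hst, hr, l, r, hs, le_refl _⟩)
      · have h2 : α ++ β < (l ++ β) ++ r := by
          rw [hassoc, List.append_assoc]
          exact append_lt_append_left l (hrββ.trans (lt_append β hrL.1))
        refine h2.trans_le ?_
        rcases g3.lt_or_eq with g3 | g3
        · exact (append_lt_of_length g3 g2.length_eq.le r r).le
        · rw [g3]
      · exact (append_lt_self hrL g1.1 hc).trans hr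
    · rw [hc, Ring.lie_def, sub_self]; exact AddSubgroup.zero_mem _
    · have hp2 : (r ++ γ).Perm (α ++ β) := List.perm_append_comm.trans hperm
      have h2 : C E r γ := IH2 r γ hrL g1 hc hp2 g4
      refine Sp_mono E ?_ (h2.weak hrL g1 hc)
      rintro η ⟨e1, e2, e3, e4, s, t, e5, e6⟩
      refine ⟨e1, e2.trans hp2, ?_, e4.trans g4, s, t, e5, ?_, l, r, hs, ?_⟩
      · exact (append_lt_of_length hαr (by omega) β γ).trans_le e3
      · rcases e6 with rfl | e6
        · exact g4
        · exact e6.1.trans g4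
      · rcases e6 with rfl | ⟨-, aL, aR, e7, e8⟩
        · exact hc.le
        · exact (lyndon_lt hrL e7.1 e7.2.1 e7.2.2.1.1).le.trans e8
  unfold C
  rw [hE2 l r α hα hs]
  have key : ⁅⁅E l, E r⁆, E β⁆ - E (α ++ β) =
      (⁅E l, E (r ++ β)⁆ - E (α ++ β)) + ⁅E l, ⁅E r, E β⁆ - E (r ++ β)⁆ - ⁅E r, ⁅E l, E β⁆⁆ := by
    simp only [Ring.lie_def]; noncomm_ring
  rw [key]
  exact AddSubgroup.sub_mem _ (AddSubgroup.add_mem _ hA hB) hD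

theorem finite_words (M : Multiset X) : {w : List X | (w : Multiset X) ≤ M}.Finite := by
  have : {w : List X | (w : Multiset X) ≤ M} = (fun w : List X => (w : Multiset X)) ⁻¹' Set.Iic M := rfl
  rw [this]
  apply Set.Finite.preimage' (Set.finite_Iic M)
  intro b _
  induction b using Quot.inductionOn with
  | h l =>
    refine (l.permutations.finite_toSet).subset ?_
    intro w hw
    have : (w : Multiset X) = (l : Multiset X) := hw
    simpa using this

noncomputable def rk (α β : List X) : ℕ :=
  {w : List X | (w : Multiset X) ≤ ((α ++ β : List X) : Multiset X) ∧ w < β}.ncard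

theorem rk_lt {a b α β : List X} (hp : (a ++ b).Perm (α ++ β)) (h : b < β) : rk a b < rk α β := by
  have he : ((a ++ b : List X) : Multiset X) = ((α ++ β : List X) : Multiset X) :=
    Multiset.coe_eq_coe.mpr hp
  unfold rk
  rw [he]
  apply Set.ncard_lt_ncard
  · refine ⟨fun w hw => ⟨hw.1, hw.2.trans h⟩, fun hh => ?_⟩
    have : b ∈ {w : List X | (w : Multiset X) ≤ ((α ++ β : List X) : Multiset X) ∧ w < β} := by
      refine ⟨?_, h⟩
      rw [← he, ← Multiset.coe_add]
      exact Multiset.le_add_left _ _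
    exact lt_irrefl _ (hh this).2
  · exact (finite_words ((α ++ β : List X) : Multiset X)).subset (fun w hw => hw.1)

theorem main (hE2 : ∀ l r w : List X, IsLyndon w → Std l r w → E w = ⁅E l, E r⁆) :
    ∀ (n k : ℕ) (α β : List X), IsLyndon α → IsLyndon β → α < β →
      (α ++ β).length = n → rk α β = k → C E α β := by
  intro n
  induction n using Nat.strong_induction_on with
  | _ n ihn =>
    intro k
    induction k using Nat.strong_induction_on with
    | _ k ihk =>
      intro α β hα hβ h hn hk
      apply step hE2 hα hβ h
      · intro a b ha hb hab hlt
        exact ihn _ (hn ▸ hlt) _ a b ha hb hab rfl rfl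
      · intro a b ha hb hab hp hlt
        exact ihk _ (hk ▸ rk_lt hp hlt) a b ha hb hab (hp.length_eq.trans hn) rfl

theorem Sp_exists {S : Set (List X)} {x : A} (hx : x ∈ Sp E S) :
    ∃ (T : Finset (List X)) (c : List X → ℤ), x = ∑ γ ∈ T, c γ • E γ ∧ ∀ γ ∈ T, γ ∈ S := by
  have h1 : x ∈ Submodule.span ℤ (E '' S) := by
    rw [← Submodule.mem_toAddSubgroup, Submodule.span_int_eq_addSubgroupClosure]
    exact hx
  rw [Finsupp.mem_span_image_iff_linearCombination] at h1
  obtain ⟨f, hf, rfl⟩ := h1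
  exact ⟨f.support, f, rfl, fun γ hγ => hf hγ⟩

end alg

end LS

/-- Commutator formula for the Lyndon–Shirshov basis, in the case `α_R ≺ β`:
`[E(α), E(β)] = E(αβ) + Σ_γ k_γ E(γ)` with control on the Lyndon words `γ`. -/
theorem stmt_4 {X : Type*} [LinearOrder X] (α αL αR β : List X)
    (E : List X → FreeAlgebra ℤ X)
    (hE1 : ∀ x : X, E [x] = FreeAlgebra.ι ℤ x)
    (hE2 : ∀ γL γR : List X, IsLyndon (γL ++ γR) → γL ≠ [] → IsLyndon γR →
      (∀ δ β' : List X, γL ++ γR = β' ++ δ → β' ≠ [] → IsLyndon δ →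
        δ.length ≤ γR.length) →
      E (γL ++ γR) = E γL * E γR - E γR * E γL)
    (hα : IsLyndon α) (hβ : IsLyndon β) (hαβ : List.Lex (· < ·) α β)
    (hlen : 2 ≤ α.length) (hfact : α = αL ++ αR) (hαL : αL ≠ []) (hαR : IsLyndon αR)
    (hmax : ∀ δ β' : List X, α = β' ++ δ → β' ≠ [] → IsLyndon δ → δ.length ≤ αR.length)
    (hRβ : List.Lex (· < ·) αR β) :
    IsLyndon (α ++ β) ∧
    (∃ L' R : List X, α ++ β = L' ++ R ∧ L' ≠ [] ∧ IsLyndon R ∧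
      (∀ δ β' : List X, α ++ β = β' ++ δ → β' ≠ [] → IsLyndon δ → δ.length ≤ R.length) ∧
      ¬ List.Lex (· < ·) R αR ∧ List.Lex (· < ·) R β) ∧
    ∃ (S : Finset (List X)) (coef : List X → ℤ),
      E α * E β - E β * E α = E (α ++ β) + ∑ γ ∈ S, coef γ • E γ ∧
      ∀ γ ∈ S, IsLyndon γ ∧ 2 ≤ γ.length ∧
        List.Lex (· < ·) (α ++ β) γ ∧ List.Lex (· < ·) γ β ∧
        (∃ γL γR : List X, γ = γL ++ γR ∧ γL ≠ [] ∧ IsLyndon γR ∧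
          (∀ δ β' : List X, γ = β' ++ δ → β' ≠ [] → IsLyndon δ → δ.length ≤ γR.length) ∧
          ¬ List.Lex (· < ·) γR αR ∧ List.Lex (· < ·) γR β) ∧
        ∀ x : X, γ.count x = α.count x + β.count x := by
  have hs : LS.Std αL αR α := ⟨hfact, hαL, hαR, hmax⟩
  refine ⟨LS.lyndon_append hα hβ hαβ, ?_, ?_⟩
  · obtain ⟨L', R, h'⟩ := LS.exists_std (α ++ β) (by simp; omega)
    obtain ⟨h3, h4⟩ := LS.std_append_lt hβ hs hRβ h'
    exact ⟨L', R, h'.1, h'.2.1, h'.2.2.1, h'.2.2.2, not_lt.mpr h3, h4⟩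
  · have hC : LS.C E α β := LS.main (E := E) (by
      rintro l r w hw ⟨rfl, h2, h3, h4⟩
      exact hE2 l r hw h2 h3 h4) _ _ α β hα hβ hαβ rfl rfl
    obtain ⟨T, c, h1, h2⟩ := LS.Sp_exists hC
    refine ⟨T, c, ?_, ?_⟩
    · rw [Ring.lie_def, sub_eq_iff_eq_add'] at h1
      rw [h1]
    · intro γ hγ
      obtain ⟨g1, g2, g3, g4, l, r, g5, g6, aL, aR, g7, g8⟩ := h2 γ hγ
      have hle : αR ≤ r := (hs.le g7.1 g7.2.1 g7.2.2.1.1).trans g8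
      exact ⟨g1, g5.two_le, g3, g4, ⟨l, r, g5.1, g5.2.1, g5.2.2.1, g5.2.2.2, not_lt.mpr hle, g6⟩,
        fun x => by rw [g2.count_eq, List.count_append]⟩
end

section
/- Let X = {1, 2} with 1 ≺ 2 and let s, t ≥ 1. Then the word 1^s·2^t (s copies of the letter 1 followed by t copies of the letter 2) is a Lyndon word, and C(1^s·2^t) = 1. -/
theorem lex_append_left_aux (l a b : List (Fin 2)) (h : List.Lex (· < ·) a b) :
    List.Lex (· < ·) (l ++ a) (l ++ b) := by
  induction l with
  | nil => exact h
  | cons x l ih => exact List.Lex.cons ih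

theorem lyndon_aux (s t : ℕ) (hs : 1 ≤ s) (ht : 1 ≤ t) :
    IsLyndon (List.replicate s (0 : Fin 2) ++ List.replicate t (1 : Fin 2)) := by
  refine ⟨by simp; omega, ?_⟩
  intro u v hu hv h
  rcases List.append_eq_append_iff.1 h with ⟨a, h1, h2⟩ | ⟨c, h1, h2⟩
  · obtain ⟨s, rfl⟩ : ∃ n, s = n + 1 := ⟨s - 1, by omega⟩
    cases v with
    | nil => exact absurd rfl hv
    | cons x v =>
      have hx : x ∈ List.replicate t (1 : Fin 2) := by rw [h2]; simp
      rw [List.eq_of_mem_replicate hx]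
      exact List.Lex.rel (by decide)
  · obtain ⟨-, h3, h4⟩ := List.append_eq_replicate_iff.1 h1.symm
    rw [h1, h2, h3, h4]
    have hu' : u.length ≠ 0 := by simpa using hu
    obtain ⟨n, hn⟩ : ∃ n, u.length = n + 1 := ⟨u.length - 1, by omega⟩
    obtain ⟨t, rfl⟩ : ∃ n, t = n + 1 := ⟨t - 1, by omega⟩
    rw [← List.replicate_add, Nat.add_comm, List.replicate_add, List.append_assoc,
      List.append_assoc]
    apply lex_append_left_aux
    rw [hn]
    exact List.Lex.rel (by decide)

theorem lyndon_single_aux (x : Fin 2) : IsLyndon [x] := by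
  refine ⟨by simp, ?_⟩
  intro u v hu hv h
  have := congrArg List.length h
  have hu' : u.length ≠ 0 := by simpa using hu
  have hv' : v.length ≠ 0 := by simpa using hv
  simp at this
  omega

/-- Over the alphabet `{1 ≺ 2}` (encoded as `Fin 2`, letter `1` is `0`, letter `2`
is `1`), the word `1^s 2^t` (`s, t ≥ 1`) is a Lyndon word and its coefficient
`C(1^s 2^t)` equals `1`, where `C` is the coefficient function characterized by
the hypotheses `hC1`, `hC2`. -/
theorem stmt_6 (k : Type*) [Field k] [CharZero k]
    (C : List (Fin 2) → k)
    (hC1 : ∀ x : Fin 2, C [x] = 1)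
    (hC2 : ∀ (x : Fin 2) (w : List (Fin 2)) (L : List (List (Fin 2) × ℕ)),
      IsLyndon (x :: w) → w ≠ [] →
      (∀ p ∈ L, IsLyndon p.1 ∧ 1 ≤ p.2) →
      L.Chain' (fun p q => List.Lex (· < ·) q.1 p.1) →
      (L.map fun p => (List.replicate p.2 p.1).flatten).flatten = w →
      C (x :: w) =
        (w.length.factorial : k) /
            (L.map fun p => (p.1.length.factorial : k) ^ p.2 * (p.2.factorial : k)).prod *
          (L.map fun p => C p.1 ^ p.2).prod)
    (s t : ℕ) (hs : 1 ≤ s) (ht : 1 ≤ t) :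
    IsLyndon (List.replicate s (0 : Fin 2) ++ List.replicate t (1 : Fin 2)) ∧
      C (List.replicate s (0 : Fin 2) ++ List.replicate t (1 : Fin 2)) = 1 := by
  refine ⟨lyndon_aux s t hs ht, ?_⟩
  induction s, hs using Nat.le_induction with
  | base =>
    have hl := lyndon_aux 1 t le_rfl ht
    have h := hC2 0 (List.replicate t 1) [([1], t)] hl (by simp; omega)
      (by simpa using ⟨lyndon_single_aux 1, ht⟩) (List.isChain_singleton _) (by simp)
    have hf : (t.factorial : k) ≠ 0 := by exact_mod_cast t.factorial_ne_zero
    refine Eq.trans h ?_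
    simp [hC1, hf]
  | succ n hn ih =>
    have hl := lyndon_aux (n + 1) t (by omega) ht
    rw [List.replicate_succ, List.cons_append] at hl ⊢
    have h := hC2 0 (List.replicate n 0 ++ List.replicate t 1)
      [(List.replicate n 0 ++ List.replicate t 1, 1)] hl (by simp; omega)
      (by simpa using lyndon_aux n t hn ht) (List.isChain_singleton _) (by simp)
    have hf : ((n + t).factorial : k) ≠ 0 := by exact_mod_cast (n + t).factorial_ne_zero
    refine Eq.trans h ?_
    simp [ih, hf]
end
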